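/- For any function f : {±1}^n → ℝ and any measurable polynomially bounded activation σ : ℝ → ℝ, the initial alignment decomposes along the Fourier basis: INAL(f, σ) = Σ_{T ⊆ [n]} f̂(T)² · INAL(M_T, σ), where f̂(T) = E_x[f(x)·M_T(x)] are the Fourier coefficients of f and M_T(x) = ∏_{i∈T} x_i. -/

import Mathlib

open MeasureTheory ProbabilityTheory Filter Finset Asymptotics
open scoped NNReal ENNReal

noncomputable section

/-- The ±1 value encoded by a Boolean bit. -/
def bsign (b : Bool) : ℝ := if b then 1 else -1

/-- Expectation over a uniformly random point of the Boolean cube `{±1}^n`. -/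
def bExp (n : ℕ) (g : (Fin n → Bool) → ℝ) : ℝ :=
  (∑ x : Fin n → Bool, g x) / 2 ^ n

/-- A function on the Boolean cube is Boolean(-valued) if it takes values in `{±1}`. -/
def IsBooleanFn {n : ℕ} (f : (Fin n → Bool) → ℝ) : Prop := ∀ x, f x = 1 ∨ f x = -1

/-- Initialization distribution: the weights `w : ℝⁿ` and the bias `b` are
iid `N(0, 1/n)` Gaussians. -/
def initMeasure (n : ℕ) : Measure ((Fin n → ℝ) × ℝ) :=
  (Measure.pi fun _ : Fin n => gaussianReal 0 (n : ℝ≥0)⁻¹).prod (gaussianReal 0 (n : ℝ≥0)⁻¹)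

/-- Initial alignment `INAL(f, σ) = E_{w,b} [ (E_x [f(x) σ(wᵀx + b)])² ]`. -/
def INAL (n : ℕ) (f : (Fin n → Bool) → ℝ) (σ : ℝ → ℝ) : ℝ :=
  ∫ θ : (Fin n → ℝ) × ℝ,
    (bExp n fun x => f x * σ (∑ i, θ.1 i * bsign (x i) + θ.2)) ^ 2 ∂ initMeasure n

/-- The `v`-Gaussian smoothing `Σ_v(t) = E_{Y ∼ N(0,v)} [σ(Y + t)]`. -/
def gsmooth (σ : ℝ → ℝ) (v : ℝ) (t : ℝ) : ℝ :=
  ∫ y, σ (y + t) ∂ gaussianReal 0 v.toNNReal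

/-- `σ` is polynomially bounded: `|σ(x)| ≤ C |x|^c + C` for some `C, c > 0`. -/
def PolyBounded (σ : ℝ → ℝ) : Prop :=
  ∃ C : ℝ, 0 < C ∧ ∃ c : ℕ, 0 < c ∧ ∀ x : ℝ, |σ x| ≤ C * |x| ^ c + C

/-- `σ` is expressive: measurable, polynomially bounded, and its Gaussian smoothing has no
two consecutive vanishing derivatives at `0`. -/
def Expressive (σ : ℝ → ℝ) : Prop :=
  Measurable σ ∧ PolyBounded σ ∧
    ∀ m : ℕ, iteratedDeriv m (gsmooth σ 1) 0 ≠ 0 ∨ iteratedDeriv (m + 1) (gsmooth σ 1) 0 ≠ 0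

/-- A nonnegative sequence is negligible if it decays faster than any inverse polynomial. -/
def Negligible (g : ℕ → ℝ) : Prop :=
  ∀ c : ℕ, Tendsto (fun n : ℕ => (n : ℝ) ^ c * g n) atTop (nhds 0)

/-- Fourier character `M_S(x) = ∏_{i ∈ S} x_i`. -/
def chi {n : ℕ} (S : Finset (Fin n)) (x : Fin n → Bool) : ℝ := ∏ i ∈ S, bsign (x i)

/-- Fourier coefficient `f̂(S) = E_x [f(x) M_S(x)]`. -/
def fourierCoef (n : ℕ) (f : (Fin n → Bool) → ℝ) (S : Finset (Fin n)) : ℝ :=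
  bExp n fun x => f x * chi S x

/-- Fourier weight up to degree `k`: `W^{≤k}(f)`. -/
def weightLE (n k : ℕ) (f : (Fin n → Bool) → ℝ) : ℝ :=
  ∑ S ∈ Finset.univ.filter (fun S : Finset (Fin n) => S.card ≤ k), fourierCoef n f S ^ 2

/-- Fourier weight strictly below degree `k`: `W^{<k}(f)`. -/
def weightLT (n k : ℕ) (f : (Fin n → Bool) → ℝ) : ℝ :=
  ∑ S ∈ Finset.univ.filter (fun S : Finset (Fin n) => S.card < k), fourierCoef n f S ^ 2

/-- The monomial `M_k(x) = ∏_{i=1}^k x_i`, viewed as a function on `{±1}^n`. -/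
def monomial (n k : ℕ) : (Fin n → Bool) → ℝ :=
  fun x => ∏ i ∈ Finset.univ.filter (fun i : Fin n => (i : ℕ) < k), bsign (x i)

/-- The `N`-extension of `f : {±1}^n → ℝ` (for `n ≤ N`): ignore the last `N - n` coordinates. -/
def extendFn (n N : ℕ) (f : (Fin n → Bool) → ℝ) : (Fin N → Bool) → ℝ :=
  fun x => f fun i => if h : (i : ℕ) < N then x ⟨i, h⟩ else false

/-- Cross-predictability of (the uniform distribution on) the orbit of `f` under coordinate
permutations, with uniform inputs: `CP(orb(f), U^N)`. -/
def orbitCP (N : ℕ) (f : (Fin N → Bool) → ℝ) : ℝ :=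
  (∑ π : Equiv.Perm (Fin N), ∑ π' : Equiv.Perm (Fin N),
      (bExp N fun x => f (fun i => x (π i)) * f (fun i => x (π' i))) ^ 2) /
    (Fintype.card (Equiv.Perm (Fin N))) ^ 2

/-- `N = n^{1+ε}` (rounded up). -/
def Ndim (ε : ℝ) (n : ℕ) : ℕ := ⌈(n : ℝ) ^ (1 + ε)⌉₊

/-!
Reflecting the `i`-th weight preserves the Gaussian initialization, and flipping the `i`-th input
bit at the same time leaves `wᵀx + b` unchanged. Hence the reflection multiplies the alignment of
the character `M_T` with a neuron by `-1` if `i ∈ T` and by `1` otherwise. If `S ≠ T`, choosing `i`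
in exactly one of them shows that the alignments of `M_S` and `M_T` are orthogonal in `L²` of the
initialization. Since alignment is linear in `f`, expanding `f` in characters and applying
Pythagoras gives the decomposition. Square integrability holds as soon as `σ` is in `L²` of the law
of `wᵀx + b`, which is `N(0, (n + 1) / n)` for every `x`.
-/

section Integral

variable {α : Type*} [MeasurableSpace α] {μ : Measure α}

lemma integral_eq_zero_of_comp_eq_neg {E : Type*} [NormedAddCommGroup E] [NormedSpace ℝ E]
    {e : α ≃ᵐ α} (he : MeasurePreserving e μ μ) {g : α → E} (hg : ∀ a, g (e a) = -g a) :
    ∫ a, g a ∂μ = 0 := by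
  have : IsAddTorsionFree E := .of_isTorsionFree ℝ E
  have hneg : ∫ a, g a ∂μ = -∫ a, g a ∂μ := by
    rw [← integral_neg, ← he.integral_comp' g]
    simp only [hg]
  exact self_eq_neg.mp hneg

lemma integral_sq_sum_const_mul_of_pairwise_orthogonal {ι : Type*} [Fintype ι] {g : ι → α → ℝ}
    (hg : ∀ i, MemLp (g i) 2 μ) (horth : Pairwise fun i j => ∫ a, g i a * g j a ∂μ = 0)
    (c : ι → ℝ) :
    ∫ a, (∑ i, c i * g i a) ^ 2 ∂μ = ∑ i, c i ^ 2 * ∫ a, g i a ^ 2 ∂μ := by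
  have hint (i j : ι) : Integrable (fun a => c i * c j * (g i a * g j a)) μ :=
    ((hg i).integrable_mul (hg j)).const_mul _
  calc ∫ a, (∑ i, c i * g i a) ^ 2 ∂μ
      = ∫ a, ∑ i, ∑ j, c i * c j * (g i a * g j a) ∂μ := by
        simp only [sq, Finset.sum_mul_sum, mul_mul_mul_comm]
    _ = ∑ i, ∑ j, c i * c j * ∫ a, g i a * g j a ∂μ := by
        rw [integral_finsetSum _ fun i _ => integrable_finsetSum _ fun j _ => hint i j]
        simp only [integral_finsetSum _ fun j _ => hint _ j, integral_const_mul]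
    _ = ∑ i, c i ^ 2 * ∫ a, g i a ^ 2 ∂μ := by
        refine Finset.sum_congr rfl fun i _ => ?_
        rw [Finset.sum_eq_single i (fun j _ hji => by rw [horth hji.symm, mul_zero]) (by simp)]
        simp only [sq]

end Integral

section Gaussian

lemma charFun_map_sum_mul_pi {ι : Type*} [Fintype ι] (μ : ι → Measure ℝ)
    [∀ i, SigmaFinite (μ i)] (a : ι → ℝ) (t : ℝ) :
    charFun ((Measure.pi μ).map fun w => ∑ i, w i * a i) t = ∏ i, charFun (μ i) (t * a i) := by
  simp only [charFun_apply_real]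
  rw [integral_map (Measurable.aemeasurable (by fun_prop)) (by fun_prop),
    ← integral_fintype_prod_eq_prod]
  refine integral_congr_ae (.of_forall fun w => ?_)
  simp only [← Complex.exp_sum]
  push_cast
  rw [Finset.mul_sum, Finset.sum_mul]
  exact congrArg _ (Finset.sum_congr rfl fun i _ => by ring)

lemma measurePreserving_sum_mul_pi_gaussianReal {ι : Type*} [Fintype ι] (m : ι → ℝ) (v : ι → ℝ≥0)
    (a : ι → ℝ) :
    MeasurePreserving (fun w : ι → ℝ => ∑ i, w i * a i)
      (Measure.pi fun i => gaussianReal (m i) (v i))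
      (gaussianReal (∑ i, m i * a i) (∑ i, v i * ‖a i‖₊ ^ 2)) := by
  refine ⟨by fun_prop, Measure.ext_of_charFun (funext fun t => ?_)⟩
  simp only [charFun_map_sum_mul_pi, charFun_gaussianReal, ← Complex.exp_sum]
  have hsq (i : ι) : (‖a i‖ : ℂ) ^ 2 = (a i : ℂ) ^ 2 := by
    rw [← Complex.ofReal_pow, Real.norm_eq_abs, sq_abs, Complex.ofReal_pow]
  push_cast
  simp only [hsq, Finset.mul_sum, Finset.sum_mul, Finset.sum_div, ← Finset.sum_sub_distrib]
  exact congrArg _ (Finset.sum_congr rfl fun i _ => by ring)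

lemma measurePreserving_add_prod_gaussianReal (m₁ m₂ : ℝ) (v₁ v₂ : ℝ≥0) :
    MeasurePreserving (fun p : ℝ × ℝ => p.1 + p.2)
      ((gaussianReal m₁ v₁).prod (gaussianReal m₂ v₂)) (gaussianReal (m₁ + m₂) (v₁ + v₂)) :=
  ⟨by fun_prop, gaussianReal_conv_gaussianReal⟩

instance isNegInvariant_gaussianReal_zero (v : ℝ≥0) : (gaussianReal 0 v).IsNegInvariant :=
  ⟨gaussianReal_map_neg.trans (by rw [neg_zero])⟩

lemma PolyBounded.memLp {σ : ℝ → ℝ} (hσ : PolyBounded σ) {μ : Measure ℝ} [IsFiniteMeasure μ]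
    (hmeas : AEStronglyMeasurable σ μ) (hmoments : ∀ p : ℝ≥0, MemLp id p μ) (q : ℝ≥0) :
    MemLp σ q μ := by
  obtain ⟨C, -, c, hc, hbound⟩ := hσ
  have hpow : MemLp (fun t : ℝ => |t| ^ c) q μ := by
    have h := (hmoments (q * c)).norm_rpow_div c
    rw [ENNReal.coe_mul, ENNReal.coe_natCast,
      ENNReal.mul_div_cancel_right (by exact_mod_cast hc.ne') (ENNReal.natCast_ne_top c)] at h
    simpa only [id_eq, Real.norm_eq_abs, ENNReal.toReal_natCast, Real.rpow_natCast] using h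
  exact ((hpow.const_mul C).add (memLp_const C)).of_le hmeas
    (.of_forall fun t => (hbound t).trans (le_abs_self _))

end Gaussian

section Cube

variable {n : ℕ}

lemma bExp_sum {ι : Type*} (s : Finset ι) (g : ι → (Fin n → Bool) → ℝ) :
    (bExp n fun x => ∑ i ∈ s, g i x) = ∑ i ∈ s, bExp n (g i) := by
  simp only [bExp]
  rw [Finset.sum_comm, Finset.sum_div]

lemma bExp_const_mul (c : ℝ) (g : (Fin n → Bool) → ℝ) :
    (bExp n fun x => c * g x) = c * bExp n g := by
  simp only [bExp, ← Finset.mul_sum, mul_div_assoc]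

lemma bExp_comp_equiv (e : Equiv.Perm (Fin n → Bool)) (g : (Fin n → Bool) → ℝ) :
    (bExp n fun x => g (e x)) = bExp n g := by
  simp only [bExp, Equiv.sum_comp e g]

lemma bsign_not (b : Bool) : bsign (!b) = -bsign b := by
  cases b <;> simp [bsign]

lemma one_add_bsign_mul_bsign (a b : Bool) :
    1 + bsign a * bsign b = if a = b then 2 else 0 := by
  cases a <;> cases b <;> norm_num [bsign]

lemma sum_chi_mul_chi (x y : Fin n → Bool) :
    ∑ T : Finset (Fin n), chi T x * chi T y = if x = y then 2 ^ n else 0 := by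
  calc ∑ T : Finset (Fin n), chi T x * chi T y
      = ∏ i, (1 + bsign (x i) * bsign (y i)) := by
        simp only [Finset.prod_one_add, Finset.powerset_univ, Finset.prod_mul_distrib, chi]
    _ = if x = y then 2 ^ n else 0 := by
        simp only [one_add_bsign_mul_bsign, Finset.prod_ite_zero, funext_iff, Finset.mem_univ,
          true_imp_iff, Finset.prod_const, Finset.card_univ, Fintype.card_fin]

theorem sum_fourierCoef_mul_chi (f : (Fin n → Bool) → ℝ) (x : Fin n → Bool) :
    ∑ T, fourierCoef n f T * chi T x = f x := by
  calc ∑ T, fourierCoef n f T * chi T x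
      = bExp n fun y => f y * ∑ T, chi T y * chi T x := by
        simp only [fourierCoef, mul_comm _ (chi _ x), ← bExp_const_mul, ← bExp_sum,
          Finset.mul_sum, mul_left_comm]
    _ = f x := by simp [sum_chi_mul_chi, bExp]

/-- The involution of the Boolean cube that negates the `i`-th coordinate. -/
def flipBit (i : Fin n) : Equiv.Perm (Fin n → Bool) :=
  Equiv.piCongrRight fun j => if j = i then Equiv.boolNot else Equiv.refl Bool

lemma bsign_flipBit (i j : Fin n) (x : Fin n → Bool) :
    bsign (flipBit i x j) = (if j = i then -1 else 1) * bsign (x j) := by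
  by_cases h : j = i <;> simp [flipBit, h, bsign_not]

lemma chi_flipBit (i : Fin n) (T : Finset (Fin n)) (x : Fin n → Bool) :
    chi T (flipBit i x) = (if i ∈ T then -1 else 1) * chi T x := by
  simp only [chi, bsign_flipBit, Finset.prod_mul_distrib, Finset.prod_ite_eq']

end Cube

section Alignment

variable {n : ℕ}

/-- The input `wᵀx + b` that the activation of a neuron with parameters `θ = (w, b)` receives at the
point `x` of the cube. -/
def preactivation (x : Fin n → Bool) (θ : (Fin n → ℝ) × ℝ) : ℝ :=
  ∑ i, θ.1 i * bsign (x i) + θ.2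

/-- The correlation `E_x [f(x) σ(wᵀx + b)]` of `f` with the neuron with parameters `θ = (w, b)`;
`INAL` is its second moment under the initialization. -/
def alignment (f : (Fin n → Bool) → ℝ) (σ : ℝ → ℝ) (θ : (Fin n → ℝ) × ℝ) : ℝ :=
  bExp n fun x => f x * σ (preactivation x θ)

/-- The involution of parameter space that negates the `i`-th weight and keeps the bias. -/
def reflectWeight (i : Fin n) : (Fin n → ℝ) × ℝ ≃ᵐ (Fin n → ℝ) × ℝ :=
  (MeasurableEquiv.piCongrRight fun j =>
    if j = i then MeasurableEquiv.neg ℝ else MeasurableEquiv.refl ℝ).prodCongr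
    (MeasurableEquiv.refl ℝ)

lemma reflectWeight_fst (i j : Fin n) (θ : (Fin n → ℝ) × ℝ) :
    (reflectWeight i θ).1 j = (if j = i then -1 else 1) * θ.1 j := by
  change (if j = i then MeasurableEquiv.neg ℝ else MeasurableEquiv.refl ℝ) (θ.1 j) = _
  by_cases h : j = i <;> simp [h]

lemma reflectWeight_snd (i : Fin n) (θ : (Fin n → ℝ) × ℝ) : (reflectWeight i θ).2 = θ.2 :=
  rfl

lemma measurePreserving_reflectWeight (μ : Fin n → Measure ℝ) [∀ j, SigmaFinite (μ j)]
    (ν : Measure ℝ) [SFinite ν] (i : Fin n) [(μ i).IsNegInvariant] :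
    MeasurePreserving (reflectWeight i) ((Measure.pi μ).prod ν) ((Measure.pi μ).prod ν) := by
  refine (measurePreserving_pi μ μ fun j => ?_).prod (MeasurePreserving.id ν)
  by_cases h : j = i
  · subst h
    simpa using Measure.measurePreserving_neg (μ j)
  · simpa [h] using MeasurePreserving.id (μ j)

lemma preactivation_flipBit_reflectWeight (i : Fin n) (x : Fin n → Bool)
    (θ : (Fin n → ℝ) × ℝ) :
    preactivation (flipBit i x) (reflectWeight i θ) = preactivation x θ := by
  have hsign (j : Fin n) : (if j = i then -1 else 1 : ℝ) * (if j = i then -1 else 1) = 1 := by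
    split_ifs <;> norm_num
  simp only [preactivation, bsign_flipBit, reflectWeight_fst, reflectWeight_snd,
    mul_mul_mul_comm, hsign, one_mul]

lemma alignment_chi_reflectWeight (T : Finset (Fin n)) (σ : ℝ → ℝ) (i : Fin n)
    (θ : (Fin n → ℝ) × ℝ) :
    alignment (chi T) σ (reflectWeight i θ) =
      (if i ∈ T then -1 else 1) * alignment (chi T) σ θ := by
  simp only [alignment]
  rw [← bExp_comp_equiv (flipBit i)]
  simp only [preactivation_flipBit_reflectWeight, chi_flipBit, mul_assoc, bExp_const_mul]

lemma alignment_eq_sum_fourierCoef_mul (f : (Fin n → Bool) → ℝ) (σ : ℝ → ℝ)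
    (θ : (Fin n → ℝ) × ℝ) :
    alignment f σ θ = ∑ T, fourierCoef n f T * alignment (chi T) σ θ := by
  simp only [alignment, ← bExp_const_mul, ← bExp_sum, ← mul_assoc, ← Finset.sum_mul,
    sum_fourierCoef_mul_chi]

variable {σ : ℝ → ℝ} {μ : Measure ((Fin n → ℝ) × ℝ)}

lemma memLp_alignment {p : ℝ≥0∞} (hσ : ∀ x, MemLp (fun θ => σ (preactivation x θ)) p μ)
    (f : (Fin n → Bool) → ℝ) : MemLp (alignment f σ) p μ := by
  unfold alignment bExp
  simp only [div_eq_mul_inv]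
  exact (memLp_finsetSum Finset.univ fun x _ => (hσ x).const_mul (f x)).mul_const _

lemma integral_alignment_chi_mul_alignment_chi_of_ne
    (hμ : ∀ i, MeasurePreserving (reflectWeight i) μ μ) {S T : Finset (Fin n)} (hST : S ≠ T) :
    ∫ θ, alignment (chi S) σ θ * alignment (chi T) σ θ ∂μ = 0 := by
  obtain ⟨i, hi⟩ : ∃ i, ¬(i ∈ S ↔ i ∈ T) := by simpa [Finset.ext_iff] using hST
  have hsign : (if i ∈ S then -1 else 1 : ℝ) * (if i ∈ T then -1 else 1) = -1 := by
    by_cases hS : i ∈ S <;> simp_all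
  refine integral_eq_zero_of_comp_eq_neg (hμ i) fun θ => ?_
  rw [alignment_chi_reflectWeight, alignment_chi_reflectWeight, mul_mul_mul_comm, hsign,
    neg_one_mul]

theorem integral_alignment_sq (hμ : ∀ i, MeasurePreserving (reflectWeight i) μ μ)
    (hσ : ∀ x, MemLp (fun θ => σ (preactivation x θ)) 2 μ) (f : (Fin n → Bool) → ℝ) :
    ∫ θ, alignment f σ θ ^ 2 ∂μ =
      ∑ T, fourierCoef n f T ^ 2 * ∫ θ, alignment (chi T) σ θ ^ 2 ∂μ := by
  simp only [alignment_eq_sum_fourierCoef_mul f]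
  exact integral_sq_sum_const_mul_of_pairwise_orthogonal (fun T => memLp_alignment hσ (chi T))
    (fun _ _ hST => integral_alignment_chi_mul_alignment_chi_of_ne hμ hST) _

end Alignment

lemma nnnorm_bsign (b : Bool) : ‖bsign b‖₊ = 1 := by
  cases b <;> simp [bsign]

lemma measurePreserving_preactivation {n : ℕ} (x : Fin n → Bool) :
    MeasurePreserving (preactivation x) (initMeasure n)
      (gaussianReal 0 ((n + 1) * (n : ℝ≥0)⁻¹)) := by
  have hsum := measurePreserving_sum_mul_pi_gaussianReal (fun _ : Fin n => 0)
    (fun _ => (n : ℝ≥0)⁻¹) fun i => bsign (x i)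
  have hadd : MeasurePreserving (preactivation x) (initMeasure n) _ :=
    (measurePreserving_add_prod_gaussianReal _ _ _ _).comp
      (hsum.prod (MeasurePreserving.id (gaussianReal 0 (n : ℝ≥0)⁻¹)))
  simpa [nnnorm_bsign, add_mul] using hadd

-- For `n = 0` both `initMeasure n` and this Gaussian are Dirac masses at `0`, as `0⁻¹ = 0`.
theorem inal_fourier_decomposition_general (n : ℕ) (f : (Fin n → Bool) → ℝ) (σ : ℝ → ℝ)
    (hσ : MemLp σ 2 (gaussianReal 0 ((n + 1) * (n : ℝ≥0)⁻¹))) :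
    INAL n f σ = ∑ T : Finset (Fin n), fourierCoef n f T ^ 2 * INAL n (chi T) σ :=
  integral_alignment_sq (fun i => measurePreserving_reflectWeight _ _ i)
    (fun x => hσ.comp_measurePreserving (measurePreserving_preactivation x)) f

/-- Fourier decomposition of the initial alignment:
`INAL(f, σ) = Σ_{T ⊆ [n]} f̂(T)² INAL(M_T, σ)`. -/
theorem inal_fourier_decomposition
    (n : ℕ) (f : (Fin n → Bool) → ℝ) (σ : ℝ → ℝ)
    (hmeas : Measurable σ) (hpb : PolyBounded σ) :
    INAL n f σ = ∑ T : Finset (Fin n), fourierCoef n f T ^ 2 * INAL n (chi T) σ :=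
  inal_fourier_decomposition_general n f σ
    (hpb.memLp hmeas.aestronglyMeasurable memLp_id_gaussianReal 2)
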